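/- arXiv:2501.09734 — 2 statements merged into one kernel-verified Lean document; each statement's English description precedes it below -/
import Mathlib

section
/- There exists an absolute constant C > 0 such that the following holds: for all positive integers l and r, every ε_S ∈ (0,1), and all independent random vectors w₁, …, w_r in ℝ^l, each having independent Gaussian N(0, 1/l) entries, one has P( |‖w_r‖² − 1| ≤ ε_S and ⟨w_i, w_r⟩² ≤ 16·(1+ε_S)/l for all i ≠ r ) ≥ 0.9999^{r−1}·( 1 − 2·exp(−l·ε_S²/C) ). -/
open scoped BigOperators NNReal
open MeasureTheory ProbabilityTheory

namespace RARC

noncomputable def enorm {n : ℕ} (v : Fin n → ℝ) : ℝ := Real.sqrt (∑ i, v i ^ 2)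

noncomputable def opNorm {m n : ℕ} (S : Matrix (Fin m) (Fin n) ℝ) : ℝ :=
  sSup {c : ℝ | ∃ v : Fin n → ℝ, enorm v = 1 ∧ c = enorm (S.mulVec v)}

noncomputable def grad {n : ℕ} (f : (Fin n → ℝ) → ℝ) (x : Fin n → ℝ) : Fin n → ℝ :=
  fun i => fderiv ℝ f x (Pi.single i 1)

noncomputable def hess {n : ℕ} (f : (Fin n → ℝ) → ℝ) (x : Fin n → ℝ) :
    Matrix (Fin n) (Fin n) ℝ :=
  Matrix.of fun i j =>
    fderiv ℝ (fun y => fderiv ℝ f y (Pi.single j 1)) x (Pi.single i 1)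

noncomputable def qhat {d l : ℕ} (f : (Fin d → ℝ) → ℝ) (x : Fin d → ℝ)
    (S : Matrix (Fin l) (Fin d) ℝ) (s : Fin l → ℝ) : ℝ :=
  f x + (∑ i, S.mulVec (grad f x) i * s i)
    + (1/2) * (∑ i, s i * (S * hess f x * S.transpose).mulVec s i)

noncomputable def mhat {d l : ℕ} (f : (Fin d → ℝ) → ℝ) (x : Fin d → ℝ)
    (S : Matrix (Fin l) (Fin d) ℝ) (α : ℝ) (s : Fin l → ℝ) : ℝ :=
  qhat f x S s + (1/(3*α)) * enorm (S.transpose.mulVec s) ^ 3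

noncomputable def lambdaMin {n : ℕ} (A : Matrix (Fin n) (Fin n) ℝ) : ℝ :=
  sInf {t : ℝ | ∃ v : Fin n → ℝ, enorm v = 1 ∧ t = ∑ i, v i * A.mulVec v i}

def LipschitzHessian {n : ℕ} (f : (Fin n → ℝ) → ℝ) (L : ℝ) : Prop :=
  ∀ x y : Fin n → ℝ, opNorm (hess f y - hess f x) ≤ L * enorm (y - x)

noncomputable def augM {d : ℕ} (f : (Fin d → ℝ) → ℝ) (x : Fin d → ℝ) :
    Matrix (Fin d) (Fin (d+1)) ℝ :=
  Matrix.of fun i j => Fin.cases (grad f x i) (fun j' => hess f x i j') j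

noncomputable def gaussVec (l : ℕ) : Measure (Fin l → ℝ) :=
  Measure.pi fun _ => gaussianReal 0 (l : ℝ≥0)⁻¹

noncomputable def scaledGaussian (l d : ℕ) : Measure (Fin l → Fin d → ℝ) :=
  Measure.pi fun _ : Fin l => Measure.pi fun _ : Fin d => gaussianReal 0 (l : ℝ≥0)⁻¹


instance gaussVec_prob (l : ℕ) : IsProbabilityMeasure (gaussVec l) := by
  unfold gaussVec; infer_instance

lemma tail_Ioi : gaussianReal 0 1 (Set.Ioi 4) ≤ ENNReal.ofReal (0.00005) := by
  rw [gaussianReal_apply_eq_integral _ one_ne_zero]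
  apply ENNReal.ofReal_le_ofReal
  have hd : ∀ x ∈ Set.Ici (4:ℝ), HasDerivAt (fun x : ℝ => -(1/4) * Real.exp (-x^2/2))
      (x / 4 * Real.exp (-x^2/2)) x := by
    intro x _
    have h1 : HasDerivAt (fun x : ℝ => -x^2/2) (-x) x := by
      have := ((hasDerivAt_pow 2 x).neg).div_const 2
      refine this.congr_deriv ?_
      norm_num
      ring
    have := (h1.exp).const_mul (-(1/4) : ℝ)
    refine this.congr_deriv ?_
    ring
  have hl : Filter.Tendsto (fun x : ℝ => -(1/4) * Real.exp (-x^2/2)) Filter.atTop (nhds 0) := by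
    have h1 : Filter.Tendsto (fun x : ℝ => -x^2/2) Filter.atTop Filter.atBot := by
      have h2 : Filter.Tendsto (fun x : ℝ => x^2) Filter.atTop Filter.atTop :=
        Filter.tendsto_pow_atTop two_ne_zero
      have := Filter.tendsto_neg_atTop_atBot.comp (h2.atTop_div_const (by norm_num : (0:ℝ) < 2))
      refine this.congr fun x => ?_
      simp [neg_div]
    have := (Real.tendsto_exp_atBot.comp h1).const_mul (-(1/4) : ℝ)
    simpa using this
  have hpos : ∀ x ∈ Set.Ioi (4:ℝ), 0 ≤ x / 4 * Real.exp (-x^2/2) := by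
    intro x hx
    have : (4:ℝ) < x := hx
    positivity
  have hint := integral_Ioi_of_hasDerivAt_of_nonneg' hd hpos hl
  have hi := integrableOn_Ioi_deriv_of_nonneg' hd hpos hl
  have hs : (2.5:ℝ) ≤ √(2 * Real.pi) := by
    apply Real.le_sqrt_of_sq_le
    nlinarith [Real.pi_gt_d2]
  have hsi : (√(2 * Real.pi))⁻¹ ≤ 0.4 := by
    rw [inv_le_comm₀ (by positivity) (by norm_num)]
    norm_num at hs ⊢; exact hs
  have he : Real.exp (-8) ≤ 0.0004 := by
    have h1 : (2.7:ℝ) ≤ Real.exp 1 := by linarith [Real.exp_one_gt_d9]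
    have h2 : Real.exp (-8) = (Real.exp 1 ^ 8)⁻¹ := by
      rw [← Real.exp_nat_mul, ← Real.exp_neg]; norm_num
    rw [h2, inv_le_comm₀ (by positivity) (by norm_num)]
    calc (0.0004:ℝ)⁻¹ ≤ 2.7 ^ 8 := by norm_num
      _ ≤ _ := by gcongr
  calc ∫ x in Set.Ioi 4, gaussianPDFReal 0 1 x
      ≤ ∫ x in Set.Ioi 4, (√(2 * Real.pi))⁻¹ * (x / 4 * Real.exp (-x^2/2)) := by
        apply setIntegral_mono_on (integrable_gaussianPDFReal _ _).integrableOn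
          (hi.const_mul _) measurableSet_Ioi
        intro x hx
        have hx : (4:ℝ) < x := hx
        simp only [gaussianPDFReal, NNReal.coe_one, mul_one, sub_zero]
        gcongr
        have := Real.exp_pos (-x^2/2)
        nlinarith
    _ = (√(2 * Real.pi))⁻¹ * (Real.exp (-8) / 4) := by
        rw [integral_const_mul, hint]
        norm_num
        left; ring
    _ ≤ 0.4 * (0.0004 / 4) := by gcongr
    _ ≤ _ := by norm_num

lemma tail_std : (1 : ENNReal) - ENNReal.ofReal 0.0001 ≤ gaussianReal 0 1 {x : ℝ | x^2 ≤ 16} := by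
  have hm : MeasurableSet {x : ℝ | x^2 ≤ 16} := measurableSet_le (by fun_prop) (by fun_prop)
  have h2 : gaussianReal 0 1 (Set.Iio (-4)) ≤ ENNReal.ofReal (0.00005) := by
    have h := gaussianReal_map_neg (μ := 0) (v := 1)
    rw [neg_zero] at h
    rw [← h, Measure.map_apply (by fun_prop) measurableSet_Iio]
    convert tail_Ioi using 2
    ext x; simp
  have h3 : gaussianReal 0 1 {x : ℝ | x^2 ≤ 16}ᶜ ≤ ENNReal.ofReal 0.0001 := by
    calc _ ≤ gaussianReal 0 1 (Set.Ioi 4 ∪ Set.Iio (-4)) := by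
          apply measure_mono
          intro x hx
          simp only [Set.mem_compl_iff, Set.mem_ofPred_eq, not_le] at hx
          simp only [Set.mem_union, Set.mem_Ioi, Set.mem_Iio]
          by_contra! h
          nlinarith
      _ ≤ _ := measure_union_le _ _
      _ ≤ ENNReal.ofReal (0.00005) + ENNReal.ofReal (0.00005) := add_le_add tail_Ioi h2
      _ = _ := by rw [← ENNReal.ofReal_add (by norm_num) (by norm_num)]; norm_num
  rw [tsub_le_iff_right]
  calc 1 = gaussianReal 0 1 {x : ℝ | x^2 ≤ 16} + gaussianReal 0 1 {x : ℝ | x^2 ≤ 16}ᶜ := by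
        rw [measure_add_measure_compl hm, measure_univ]
    _ ≤ _ := by gcongr

lemma tail_gen (c b : ℝ) (h : c^2 ≤ b) :
    ENNReal.ofReal 0.9999 ≤ gaussianReal 0 (NNReal.mk (c^2) (sq_nonneg c)) {x : ℝ | x^2 ≤ 16 * b} := by
  have h1 := gaussianReal_map_const_mul (μ := 0) (v := 1) c
  simp only [mul_zero, mul_one] at h1
  have hm : MeasurableSet {x : ℝ | x^2 ≤ 16 * b} := measurableSet_le (by fun_prop) (by fun_prop)
  have h2 : gaussianReal 0 (NNReal.mk (c^2) (sq_nonneg c)) {x : ℝ | x^2 ≤ 16 * b}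
      = gaussianReal 0 1 ((c * ·) ⁻¹' {x : ℝ | x^2 ≤ 16 * b}) := by
    rw [← Measure.map_apply (by fun_prop) hm, h1]
  rw [h2]
  calc ENNReal.ofReal 0.9999 = 1 - ENNReal.ofReal 0.0001 := by
        rw [← ENNReal.ofReal_one, ← ENNReal.ofReal_sub _ (by norm_num)]; norm_num
    _ ≤ _ := tail_std
    _ ≤ _ := by
        apply measure_mono
        intro x hx
        have hx : x^2 ≤ 16 := hx
        show (c * x)^2 ≤ 16 * b
        rw [mul_pow]
        nlinarith [sq_nonneg c, sq_nonneg x]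

lemma law_inner (l : ℕ) (v : Fin l → ℝ) (c : ℝ) (hc : c^2 = (∑ j, v j ^ 2) / l) :
    (gaussVec l).map (fun w => ∑ j, w j * v j) = gaussianReal 0 (NNReal.mk (c^2) (sq_nonneg c)) := by
  have : IsProbabilityMeasure ((gaussVec l).map (fun w => ∑ j, w j * v j)) :=
    Measure.isProbabilityMeasure_map (Measurable.aemeasurable (by fun_prop))
  apply Measure.ext_of_charFun
  ext t
  rw [charFun_gaussianReal, charFun_apply_real, integral_map (Measurable.aemeasurable (by fun_prop)) (by fun_prop)]
  have h1 : ∀ w : Fin l → ℝ, Complex.exp (t * (∑ j, w j * v j : ℝ) * Complex.I)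
      = ∏ j, Complex.exp ((t * v j : ℝ) * (w j) * Complex.I) := by
    intro w
    rw [← Complex.exp_sum]
    congr 1
    push_cast
    rw [Finset.mul_sum, Finset.sum_mul]
    exact Finset.sum_congr rfl fun j _ => by ring
  simp_rw [h1]
  unfold gaussVec
  rw [integral_fintype_prod_eq_prod (f := fun j (x : ℝ) => Complex.exp ((t * v j : ℝ) * x * Complex.I))]
  simp_rw [← charFun_apply_real, charFun_gaussianReal]
  rw [← Complex.exp_sum]
  congr 1
  have : ((NNReal.mk (c^2) (sq_nonneg c)) : ℝ) = (∑ j, v j ^ 2) / l := hc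
  rw [this]
  push_cast
  simp only [mul_zero, zero_mul, zero_sub]
  rw [Finset.sum_neg_distrib, Finset.sum_div, Finset.sum_mul, Finset.sum_div]
  congr 1
  exact Finset.sum_congr rfl fun j _ => by ring

lemma inner_tail (l : ℕ) (v : Fin l → ℝ) (ε : ℝ) (h : (∑ j, v j ^ 2) ≤ 1 + ε) :
    ENNReal.ofReal 0.9999 ≤ gaussVec l {w | (∑ j, w j * v j) ^ 2 ≤ 16 * (1 + ε) / l} := by
  have hn : 0 ≤ (∑ j, v j ^ 2) / (l:ℝ) := by positivity
  have hc := Real.sq_sqrt hn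
  set c := √((∑ j, v j ^ 2) / (l:ℝ))
  have h1 := tail_gen c ((1+ε)/l) (by rw [hc]; gcongr)
  rw [← law_inner l v c hc, Measure.map_apply (by fun_prop)
    (measurableSet_le (by fun_prop) (by fun_prop))] at h1
  simpa only [Set.preimage_ofPred_eq, mul_div_assoc] using h1

lemma exp_aux (u : ℝ) (h1 : -(1/2) ≤ u) (h2 : u ≤ 1/2) : 1 ≤ (1 - u) * Real.exp (u + u^2) := by
  rcases le_or_gt 0 u with h | h
  · have := Real.quadratic_le_exp_of_nonneg (x := u + u^2) (by positivity)
    calc (1:ℝ) ≤ (1 - u) * (1 + (u+u^2) + (u+u^2)^2/2) := by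
          have : 0 ≤ u^2 * ((1-u)*(1+u)^2 - 2*u) := by
            apply mul_nonneg (sq_nonneg _)
            nlinarith [mul_nonneg h (sub_nonneg.2 h2), mul_nonneg (mul_nonneg h h) (sub_nonneg.2 h2)]
          nlinarith
      _ ≤ _ := by gcongr; linarith
  · have := Real.add_one_le_exp (u + u^2)
    calc (1:ℝ) ≤ (1 - u) * ((u+u^2) + 1) := by nlinarith [mul_pos_of_neg_of_neg h h, pow_pos (neg_pos.2 h) 3]
      _ ≤ _ := by gcongr; linarith

lemma mgf_sq (l : ℕ) (hl : 0 < l) (s : ℝ) (h1 : -(1/4) ≤ s) (h2 : s ≤ 1/4) :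
    Integrable (fun x : ℝ => Real.exp (s * l * x^2)) (gaussianReal 0 (l : ℝ≥0)⁻¹) ∧
    ∫ x, Real.exp (s * l * x^2) ∂(gaussianReal 0 (l : ℝ≥0)⁻¹) ≤ Real.exp (s + 2 * s^2) := by
  have hl' : (0:ℝ) < l := by exact_mod_cast hl
  have hv : (l : ℝ≥0)⁻¹ ≠ 0 := by positivity
  have hb : 0 < (l:ℝ) * (1 - 2*s) / 2 := by
    have : 0 < 1 - 2 * s := by linarith
    positivity
  have heq : ∀ x : ℝ, gaussianPDFReal 0 (l : ℝ≥0)⁻¹ x * Real.exp (s * l * x^2)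
      = (√(2 * Real.pi * (l:ℝ)⁻¹))⁻¹ * Real.exp (-((l:ℝ) * (1 - 2*s) / 2) * x^2) := by
    intro x
    simp only [gaussianPDFReal, NNReal.coe_inv, NNReal.coe_natCast, sub_zero]
    rw [mul_assoc, ← Real.exp_add]
    congr 2
    field_simp
    ring
  constructor
  · rw [gaussianReal_of_var_ne_zero _ hv]
    rw [integrable_withDensity_iff_integrable_smul₀' (by fun_prop) (by simp [gaussianPDF])]
    have : Integrable (fun x : ℝ => (√(2 * Real.pi * (l:ℝ)⁻¹))⁻¹ *
      Real.exp (-((l:ℝ) * (1 - 2*s) / 2) * x^2)) := (integrable_exp_neg_mul_sq hb).const_mul _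
    refine this.congr (Filter.Eventually.of_forall fun x => ?_)
    simp only [toReal_gaussianPDF, smul_eq_mul, heq]
  · rw [integral_gaussianReal_eq_integral_smul hv]
    simp only [smul_eq_mul, heq]
    rw [integral_const_mul, integral_gaussian]
    have h3 : (√(2 * Real.pi * (l:ℝ)⁻¹))⁻¹ * √(Real.pi / ((l:ℝ) * (1 - 2*s) / 2))
        = √((1 - 2*s)⁻¹) := by
      rw [← Real.sqrt_inv, ← Real.sqrt_mul (by positivity)]
      congr 1
      have : 0 < 1 - 2 * s := by linarith
      field_simp
    rw [h3]
    apply Real.sqrt_le_iff.2 ⟨by positivity, ?_⟩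
    have := exp_aux (2*s) (by linarith) (by linarith)
    have hp : 0 < 1 - 2 * s := by linarith
    rw [← Real.exp_nat_mul, inv_le_iff_one_le_mul₀' hp]
    have e : ((2:ℕ):ℝ) * (s + 2 * s^2) = 2*s + (2*s)^2 := by push_cast; ring
    rw [e]; exact this

lemma chern (l : ℕ) (hl : 0 < l) (s : ℝ) (h1 : -(1/4) ≤ s) (h2 : s ≤ 1/4) (a : ℝ) :
    gaussVec l {w | a ≤ s * l * ∑ j, w j ^ 2} ≤
      ENNReal.ofReal (Real.exp (l * (s + 2 * s^2) - a)) := by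
  obtain ⟨hi, hb⟩ := mgf_sq l hl s h1 h2
  have hprod : ∀ w : Fin l → ℝ, Real.exp (s * l * ∑ j, w j ^ 2) = ∏ j, Real.exp (s * l * w j ^ 2) := by
    intro w; rw [← Real.exp_sum, Finset.mul_sum]
  have hI : Integrable (fun w : Fin l → ℝ => Real.exp (s * l * ∑ j, w j ^ 2)) (gaussVec l) := by
    simp_rw [hprod]
    exact Integrable.fintype_prod (f := fun _ x => Real.exp (s * l * x^2)) fun _ => hi
  have hE : ∫ w, Real.exp (s * l * ∑ j, w j ^ 2) ∂(gaussVec l) ≤ Real.exp (l * (s + 2*s^2)) := by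
    simp_rw [hprod]
    unfold gaussVec
    rw [integral_fintype_prod_eq_pow (fun x : ℝ => Real.exp (s * l * x^2)), Fintype.card_fin,
      Real.exp_nat_mul]
    gcongr
  have hM := mul_meas_ge_le_integral_of_nonneg (μ := gaussVec l)
    (Filter.Eventually.of_forall fun w => (Real.exp_pos _).le) hI (Real.exp a)
  simp only [Real.exp_le_exp] at hM
  rw [← ofReal_measureReal]
  apply ENNReal.ofReal_le_ofReal
  rw [Real.exp_sub, le_div_iff₀ (Real.exp_pos _)]
  linarith

lemma enorm_sq {l : ℕ} (v : Fin l → ℝ) : enorm v ^ 2 = ∑ j, v j ^ 2 := by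
  unfold enorm; exact Real.sq_sqrt (by positivity)

lemma meas_norm (l : ℕ) (ε : ℝ) :
    MeasurableSet {v : Fin l → ℝ | |enorm v ^ 2 - 1| ≤ ε} := by
  simp_rw [enorm_sq]
  exact measurableSet_le (by fun_prop) (by fun_prop)

lemma norm_conc (l : ℕ) (hl : 0 < l) (ε : ℝ) (h0 : 0 < ε) (h1 : ε < 1) :
    ENNReal.ofReal (1 - 2 * Real.exp (-((l:ℝ) * ε^2) / 8)) ≤
      gaussVec l {v | |enorm v ^ 2 - 1| ≤ ε} := by
  have hl' : (0:ℝ) < l := by exact_mod_cast hl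
  have hA := chern l hl (ε/4) (by linarith) (by linarith) (ε/4 * l * (1 + ε))
  have hB := chern l hl (-(ε/4)) (by linarith) (by linarith) (-(ε/4) * l * (1 - ε))
  have e1 : (l:ℝ) * (ε/4 + 2 * (ε/4)^2) - ε/4 * l * (1 + ε) = -((l:ℝ) * ε^2) / 8 := by ring
  have e2 : (l:ℝ) * (-(ε/4) + 2 * (-(ε/4))^2) - -(ε/4) * l * (1 - ε) = -((l:ℝ) * ε^2) / 8 := by ring
  rw [e1] at hA
  rw [e2] at hB
  have hc : gaussVec l {v | |enorm v ^ 2 - 1| ≤ ε}ᶜ ≤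
      ENNReal.ofReal (2 * Real.exp (-((l:ℝ) * ε^2) / 8)) := by
    rw [two_mul, ENNReal.ofReal_add (Real.exp_pos _).le (Real.exp_pos _).le]
    refine le_trans (le_trans (measure_mono ?_) (measure_union_le _ _)) (add_le_add hA hB)
    intro v hv
    simp only [Set.mem_compl_iff, Set.mem_ofPred_eq, not_le, enorm_sq, lt_abs] at hv
    have hp : 0 < ε/4 * l := by positivity
    rcases hv with hv | hv
    · left
      show ε/4 * l * (1 + ε) ≤ ε/4 * l * ∑ j, v j ^ 2
      apply mul_le_mul_of_nonneg_left _ hp.le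
      linarith
    · right
      show -(ε/4) * l * (1 - ε) ≤ -(ε/4) * l * ∑ j, v j ^ 2
      nlinarith
  rw [ENNReal.ofReal_sub _ (by positivity), ENNReal.ofReal_one, tsub_le_iff_right]
  calc 1 = gaussVec l {v | |enorm v ^ 2 - 1| ≤ ε} + gaussVec l {v | |enorm v ^ 2 - 1| ≤ ε}ᶜ := by
        rw [measure_add_measure_compl (meas_norm l ε), measure_univ]
    _ ≤ _ := by gcongr

theorem stmt13 : ∃ C : ℝ, 0 < C ∧ ∀ (l n : ℕ), 0 < l → ∀ ε_S : ℝ,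
    ε_S ∈ Set.Ioo (0:ℝ) 1 →
    (Measure.pi fun _ : Fin (n+1) => gaussVec l)
        {w : Fin (n+1) → Fin l → ℝ |
          |enorm (w (Fin.last n)) ^ 2 - 1| ≤ ε_S ∧
          ∀ i, i ≠ Fin.last n →
            (∑ j, w i j * w (Fin.last n) j) ^ 2 ≤ 16 * (1 + ε_S) / l}
      ≥ ENNReal.ofReal
          ((0.9999 : ℝ) ^ n * (1 - 2 * Real.exp (-((l:ℝ) * ε_S ^ 2) / C))) := by
  refine ⟨8, by norm_num, fun l n hl ε ⟨h0, h1⟩ => ?_⟩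
  have hmp := measurePreserving_piFinSuccAbove (fun _ : Fin (n+1) => gaussVec l) (Fin.last n)
  set T : Set ((Fin l → ℝ) × (Fin n → Fin l → ℝ)) :=
    {p | |enorm p.1 ^ 2 - 1| ≤ ε ∧ ∀ i, (∑ j, p.2 i j * p.1 j) ^ 2 ≤ 16 * (1 + ε) / l} with hT
  have hTm : MeasurableSet T := by
    simp only [hT, enorm_sq, Set.ofPred_and, Set.ofPred_forall]
    exact (measurableSet_le (by fun_prop) (by fun_prop)).inter
      (MeasurableSet.iInter fun i => measurableSet_le (by fun_prop) (by fun_prop))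
  have hS : {w : Fin (n+1) → Fin l → ℝ |
          |enorm (w (Fin.last n)) ^ 2 - 1| ≤ ε ∧
          ∀ i, i ≠ Fin.last n →
            (∑ j, w i j * w (Fin.last n) j) ^ 2 ≤ 16 * (1 + ε) / l} =
      (MeasurableEquiv.piFinSuccAbove (fun _ => Fin l → ℝ) (Fin.last n)) ⁻¹' T := by
    ext w
    simp only [hT, Set.mem_ofPred_eq, Set.mem_preimage]
    refine and_congr Iff.rfl ⟨fun h i => ?_, fun h i hi => ?_⟩
    · have := h ((Fin.last n).succAbove i) (Fin.succAbove_ne _ _)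
      exact this
    · obtain ⟨k, rfl⟩ := Fin.exists_succAbove_eq hi
      exact h k
  rw [hS, hmp.measure_preimage hTm.nullMeasurableSet, Measure.prod_apply hTm, ge_iff_le,
    ENNReal.ofReal_mul (by positivity)]
  calc ENNReal.ofReal (0.9999 ^ n) * ENNReal.ofReal (1 - 2 * Real.exp (-((l:ℝ) * ε ^ 2) / 8))
      ≤ ENNReal.ofReal (0.9999 ^ n) * gaussVec l {v | |enorm v ^ 2 - 1| ≤ ε} := by
        gcongr; exact norm_conc l hl ε h0 h1
    _ = ∫⁻ v in {v | |enorm v ^ 2 - 1| ≤ ε}, ENNReal.ofReal (0.9999 ^ n) ∂(gaussVec l) := by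
        rw [setLIntegral_const]
    _ ≤ ∫⁻ v in {v | |enorm v ^ 2 - 1| ≤ ε},
          (Measure.pi fun _ : Fin n => gaussVec l) (Prod.mk v ⁻¹' T) ∂(gaussVec l) := by
        apply setLIntegral_mono' (meas_norm l ε)
        intro v hv
        have hv : |enorm v ^ 2 - 1| ≤ ε := hv
        have : Prod.mk v ⁻¹' T = Set.univ.pi
            fun _ : Fin n => {w : Fin l → ℝ | (∑ j, w j * v j) ^ 2 ≤ 16 * (1 + ε) / l} := by
          ext p
          simp [hT, hv]
        rw [this, Measure.pi_pi, Finset.prod_const, Finset.card_univ, Fintype.card_fin,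
          ENNReal.ofReal_pow (by norm_num)]
        gcongr
        apply inner_tail
        rw [enorm_sq] at hv
        linarith [(abs_le.1 hv).2]
    _ ≤ _ := setLIntegral_le_lintegral _ _

end RARC
end

section
/- Let ε > 0, ε_S ∈ (0,1), S_max > 0, α_max > 0 and 0 < α ≤ α_max. Let f : ℝ^d → ℝ be twice differentiable at x ∈ ℝ^d, let S ∈ ℝ^{l×d} and ŝ ∈ ℝ^l. Set c = √( 4·√(1−ε_S)·S_max / (3·α_max) ). Assume: (a) ‖S‖ ≤ S_max; (b) ‖S·∇²f(x)‖ ≤ c·√ε; (c) ‖S·∇f(x)‖² ≥ (1−ε_S)·ε²; (d) S∇f(x) + S∇²f(x)Sᵀŝ + (1/α)·S Sᵀŝ·‖Sᵀŝ‖ = 0. Then ‖Sᵀŝ‖ ≥ α·√( √(1−ε_S)·ε / (3·S_max·α_max) ). -/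
open scoped BigOperators NNReal
open MeasureTheory ProbabilityTheory

namespace RARC

theorem enorm_eq {n : ℕ} (v : Fin n → ℝ) : enorm v = ‖(WithLp.toLp 2 v : EuclideanSpace ℝ (Fin n))‖ := by
  simp [enorm, EuclideanSpace.norm_eq]

theorem enorm_nn {n : ℕ} (v : Fin n → ℝ) : 0 ≤ enorm v := Real.sqrt_nonneg _

theorem enorm_smul' {n : ℕ} (a : ℝ) (v : Fin n → ℝ) : enorm (a • v) = |a| * enorm v := by
  rw [enorm_eq, enorm_eq, WithLp.toLp_smul, norm_smul, Real.norm_eq_abs]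

theorem enorm_bdd {m n : ℕ} (S : Matrix (Fin m) (Fin n) ℝ) :
    BddAbove {c : ℝ | ∃ v : Fin n → ℝ, enorm v = 1 ∧ c = enorm (S.mulVec v)} := by
  refine ⟨Real.sqrt (∑ i, ∑ j, S i j ^ 2), ?_⟩
  rintro c ⟨v, hv, rfl⟩
  have hv' : ∑ j, v j ^ 2 = 1 := by
    unfold enorm at hv
    exact Real.sqrt_eq_one.mp hv
  refine Real.sqrt_le_sqrt (Finset.sum_le_sum fun i _ => ?_)
  have := Finset.sum_mul_sq_le_sq_mul_sq Finset.univ (S i) v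
  rw [hv', mul_one] at this
  exact this

theorem enorm_mulVec_le {m n : ℕ} (S : Matrix (Fin m) (Fin n) ℝ) (v : Fin n → ℝ) :
    enorm (S.mulVec v) ≤ opNorm S * enorm v := by
  rcases (enorm_nn v).eq_or_lt with h | h
  · have hv : v = 0 := by
      rw [enorm_eq, eq_comm, norm_eq_zero] at h
      simpa using h
    subst hv
    simp [enorm]
  · have h1 : enorm ((enorm v)⁻¹ • v) = 1 := by
      rw [enorm_smul', abs_of_pos (inv_pos.mpr h), inv_mul_cancel₀ h.ne']
    have h2 : enorm (S.mulVec ((enorm v)⁻¹ • v)) ≤ opNorm S := le_csSup (enorm_bdd S) ⟨_, h1, rfl⟩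
    rw [Matrix.mulVec_smul, enorm_smul', abs_of_pos (inv_pos.mpr h), inv_mul_le_iff₀ h] at h2
    linarith

theorem stmt15 {d l : ℕ} (ε ε_S S_max α_max α : ℝ)
    (hε : 0 < ε) (hεS : ε_S ∈ Set.Ioo (0:ℝ) 1) (hSmax : 0 < S_max)
    (hαmax : 0 < α_max) (hα : 0 < α) (hααmax : α ≤ α_max)
    (f : (Fin d → ℝ) → ℝ) (x : Fin d → ℝ)
    (hf1 : DifferentiableAt ℝ f x) (hf2 : DifferentiableAt ℝ (fderiv ℝ f) x)
    (S : Matrix (Fin l) (Fin d) ℝ) (sh : Fin l → ℝ)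
    (c : ℝ) (hcdef : c = Real.sqrt (4 * Real.sqrt (1 - ε_S) * S_max / (3 * α_max)))
    (ha : opNorm S ≤ S_max)
    (hb : opNorm (S * hess f x) ≤ c * Real.sqrt ε)
    (hc : enorm (S.mulVec (grad f x)) ^ 2 ≥ (1 - ε_S) * ε ^ 2)
    (hd : S.mulVec (grad f x) + (S * hess f x * S.transpose).mulVec sh
            + ((1/α) * enorm (S.transpose.mulVec sh)) • (S * S.transpose).mulVec sh = 0) :
    enorm (S.transpose.mulVec sh)
      ≥ α * Real.sqrt (Real.sqrt (1 - ε_S) * ε / (3 * S_max * α_max)) := by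
  obtain ⟨h0, h1⟩ := hεS
  set w := S.transpose.mulVec sh with hw
  set u := enorm w with hu
  have hu0 : 0 ≤ u := enorm_nn _
  set A := Real.sqrt (1 - ε_S) * ε with hA
  have hq : 0 < Real.sqrt (1 - ε_S) := Real.sqrt_pos.mpr (by linarith)
  have hA0 : 0 < A := by positivity
  set T := Real.sqrt (A / (3 * S_max * α_max)) with hT
  have hT0 : 0 < T := Real.sqrt_pos.mpr (by positivity)
  have hT2 : 3 * S_max * α_max * T ^ 2 = A := by
    rw [hT, Real.sq_sqrt (by positivity)]
    field_simp
  have hcT : c * Real.sqrt ε = 2 * S_max * T := by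
    rw [hcdef, ← Real.sqrt_mul (by positivity), Real.sqrt_eq_iff_mul_self_eq (by positivity) (by positivity)]
    have : 4 * Real.sqrt (1 - ε_S) * S_max / (3 * α_max) * ε = 4 * S_max * A / (3 * α_max) := by
      rw [hA]; ring
    rw [this, ← hT2]
    field_simp
    norm_num
  have hAle : A ≤ enorm (S.mulVec (grad f x)) := by
    refine le_of_sq_le_sq ?_ (enorm_nn _)
    rw [hA, mul_pow, Real.sq_sqrt (by linarith)]
    exact hc
  rw [← Matrix.mulVec_mulVec sh (S * hess f x), ← Matrix.mulVec_mulVec sh S, ← hw] at hd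
  have hg : S.mulVec (grad f x) = (-1 : ℝ) • ((S * hess f x).mulVec w + ((1/α) * u) • S.mulVec w) := by
    rw [neg_one_smul, eq_neg_iff_add_eq_zero, ← add_assoc]; exact hd
  have htri : enorm (S.mulVec (grad f x)) ≤ enorm ((S * hess f x).mulVec w) + (1/α) * u * enorm (S.mulVec w) := by
    rw [hg, enorm_smul', abs_neg, abs_one, one_mul]
    have h3 : enorm (((1/α) * u) • S.mulVec w) = (1/α) * u * enorm (S.mulVec w) := by
      rw [enorm_smul', abs_of_nonneg (by positivity)]
    rw [← h3, enorm_eq, enorm_eq, enorm_eq, WithLp.toLp_add]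
    exact norm_add_le _ _
  have hk1 : enorm ((S * hess f x).mulVec w) ≤ 2 * S_max * T * u :=
    (enorm_mulVec_le _ _).trans (mul_le_mul_of_nonneg_right (hb.trans hcT.le) hu0)
  have hk2 : enorm (S.mulVec w) ≤ S_max * u :=
    (enorm_mulVec_le _ _).trans (mul_le_mul_of_nonneg_right ha hu0)
  by_contra! hlt
  have hua : (1/α) * u < T := by
    rw [one_div, inv_mul_lt_iff₀ hα]; exact hlt
  have hua0 : 0 ≤ (1/α) * u := by positivity
  have hk3 : (1/α) * u * enorm (S.mulVec w) ≤ T * (S_max * u) :=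
    mul_le_mul hua.le hk2 (enorm_nn _) hT0.le
  have hST : 0 < 3 * S_max * T := by positivity
  have h4 : 3 * S_max * T * u < 3 * S_max * T * (α * T) := mul_lt_mul_of_pos_left hlt hST
  have h5 : 3 * S_max * T * T * α ≤ 3 * S_max * T * T * α_max :=
    mul_le_mul_of_nonneg_left hααmax (by positivity)
  nlinarith

end RARC
end
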